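/- arXiv:1805.09965 — 2 statements merged into one kernel-verified Lean document; each statement's English description precedes it below -/
import Mathlib

section
/- Assume the LAG setup, and in addition: 𝓛 is bounded below with 𝓛* := inf 𝓛; 0 < α < 1/L; β_1 = (1 − αL)/(2α); and ξ_d < 2α(β_d − β_{d+1}) for every d = 1, …, D (with β_{D+1} := 0). Then lim_{K→∞} K · min_{1 ≤ k ≤ K} ‖θ^{k+1} − θ^k‖² = 0 and lim_{K→∞} K · min_{1 ≤ k ≤ K} ‖∇𝓛(θ^k)‖² = 0. -/
open Finset

/-- `K · min` of a nonnegative sequence with bounded partial sums tends to zero. -/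
theorem lag_aux_min (a : ℤ → ℝ) (ha : ∀ k, 0 ≤ a k) (C : ℝ)
    (hC : ∀ K : ℕ, ∑ k ∈ Finset.range K, a ((k : ℤ) + 1) ≤ C) :
    Filter.Tendsto (fun K : ℕ => (K : ℝ) * sInf (a '' Set.Icc 1 (K : ℤ)))
      Filter.atTop (nhds 0) := by
  have hs : Summable (fun k : ℕ => a ((k : ℤ) + 1)) :=
    summable_of_sum_range_le (fun k => ha _) hC
  have ht := hs.hasSum.tendsto_sum_nat
  have hhalf : Filter.Tendsto (fun K : ℕ => K / 2) Filter.atTop Filter.atTop := by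
    refine Filter.tendsto_atTop.2 fun b => ?_
    filter_upwards [Filter.eventually_ge_atTop (2 * b)] with K hK
    omega
  have ht2 := ht.comp hhalf
  have hlim := (ht.sub ht2).const_mul 2
  simp only [sub_self, mul_zero] at hlim
  refine squeeze_zero (fun K => ?_) (fun K => ?_) hlim
  · refine mul_nonneg (Nat.cast_nonneg _) (Real.sInf_nonneg ?_)
    rintro _ ⟨k, -, rfl⟩
    exact ha k
  · have hbb : BddBelow (a '' Set.Icc 1 (K : ℤ)) := by
      refine ⟨0, ?_⟩
      rintro _ ⟨k, -, rfl⟩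
      exact ha k
    have hnn : 0 ≤ sInf (a '' Set.Icc 1 (K : ℤ)) := by
      refine Real.sInf_nonneg ?_
      rintro _ ⟨k, -, rfl⟩
      exact ha k
    have h1 : ∑ k ∈ Finset.Ico (K / 2) K, sInf (a '' Set.Icc 1 (K : ℤ))
        ≤ ∑ k ∈ Finset.Ico (K / 2) K, a ((k : ℤ) + 1) := by
      refine Finset.sum_le_sum fun k hk => ?_
      rw [Finset.mem_Ico] at hk
      refine csInf_le hbb ⟨(k : ℤ) + 1, ⟨by omega, by omega⟩, rfl⟩
    rw [Finset.sum_const, Nat.card_Ico, nsmul_eq_mul] at h1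
    rw [Finset.sum_Ico_eq_sub _ (by omega : K / 2 ≤ K)] at h1
    have h2 : (K : ℝ) ≤ 2 * ((K - K / 2 : ℕ) : ℝ) := by
      exact_mod_cast (by omega : K ≤ 2 * (K - K / 2))
    have h3 := mul_le_mul_of_nonneg_right h2 hnn
    simp only [Function.comp]
    linarith

/-- Telescoping bound. -/
theorem lag_aux_tele (V a : ℤ → ℝ) (c B : ℝ) (hc : 0 < c)
    (hV : ∀ k, B ≤ V k)
    (hstep : ∀ k : ℤ, 1 ≤ k → V (k + 1) + c * a k ≤ V k) (K : ℕ) :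
    ∑ k ∈ Finset.range K, a ((k : ℤ) + 1) ≤ (V 1 - B) / c := by
  have h : ∀ K : ℕ, V ((K : ℤ) + 1) + c * ∑ k ∈ Finset.range K, a ((k : ℤ) + 1) ≤ V 1 := by
    intro K
    induction K with
    | zero => simp
    | succ K ih =>
      rw [Finset.sum_range_succ, mul_add]
      have := hstep ((K : ℤ) + 1) (by omega)
      push_cast
      linarith
  rw [le_div_iff₀ hc]
  have := h K
  have := hV ((K : ℤ) + 1)
  linarith

/-- Descent lemma. -/
theorem lag_aux_descent {n : ℕ} (f : EuclideanSpace ℝ (Fin n) → ℝ) (hf : Differentiable ℝ f)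
    (L : ℝ) (hs : ∀ x y, ‖gradient f x - gradient f y‖ ≤ L * ‖x - y‖)
    (x v : EuclideanSpace ℝ (Fin n)) :
    f (x + v) ≤ f x + inner ℝ (gradient f x) v + L / 2 * ‖v‖ ^ 2 := by
  have hd : ∀ t : ℝ, HasDerivAt (fun t : ℝ => f (x + t • v) - t * inner ℝ (gradient f x) v
      - L / 2 * ‖v‖ ^ 2 * t ^ 2)
      (inner ℝ (gradient f (x + t • v)) v - inner ℝ (gradient f x) v
        - L * ‖v‖ ^ 2 * t) t := by
    intro t
    have h1 : HasDerivAt (fun t : ℝ => x + t • v) v t := by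
      simpa using ((hasDerivAt_id t).smul_const v).const_add x
    have h2 := ((hf (x + t • v)).hasGradientAt.hasFDerivAt).comp_hasDerivAt t h1
    have h3 := (hasDerivAt_id t).mul_const (inner ℝ (gradient f x) v)
    have h4 := ((hasDerivAt_id t).pow 2).const_mul (L / 2 * ‖v‖ ^ 2)
    have h5 := (h2.sub h3).sub h4
    refine (h5.congr_deriv ?_)
    simp
    ring
  have hanti : AntitoneOn (fun t : ℝ => f (x + t • v) - t * inner ℝ (gradient f x) v
      - L / 2 * ‖v‖ ^ 2 * t ^ 2) (Set.Icc 0 1) := by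
    refine antitoneOn_of_deriv_nonpos (convex_Icc 0 1)
      (fun t _ => (hd t).continuousAt.continuousWithinAt)
      (fun t _ => (hd t).differentiableAt.differentiableWithinAt) ?_
    intro t ht
    rw [interior_Icc] at ht
    rw [(hd t).deriv, ← inner_sub_left]
    have h1 := real_inner_le_norm (gradient f (x + t • v) - gradient f x) v
    have h2 := hs (x + t • v) x
    rw [add_sub_cancel_left, norm_smul, Real.norm_eq_abs, abs_of_pos ht.1] at h2
    have h3 := mul_le_mul_of_nonneg_right h2 (norm_nonneg v)
    nlinarith
  have h := hanti (Set.left_mem_Icc.2 zero_le_one) (Set.right_mem_Icc.2 zero_le_one) zero_le_one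
  simp only [one_smul, zero_smul, add_zero] at h
  linarith

/-- Squared norm of a sum of `M` vectors with bounded squared norms. -/
theorem lag_aux_sum {E : Type*} [SeminormedAddCommGroup E] (M : ℕ) (e : Fin M → E) (B : ℝ)
    (he : ∀ m, ‖e m‖ ^ 2 ≤ B) : ‖∑ m, e m‖ ^ 2 ≤ (M : ℝ) ^ 2 * B := by
  have h1 : ‖∑ m, e m‖ ^ 2 ≤ (∑ m, ‖e m‖) ^ 2 :=
    pow_le_pow_left₀ (norm_nonneg _) (norm_sum_le _ _) 2
  have h2 := sq_sum_le_card_mul_sum_sq (s := (Finset.univ : Finset (Fin M))) (f := fun m => ‖e m‖)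
  have h3 : ∑ m, ‖e m‖ ^ 2 ≤ (M : ℝ) * B := by
    refine (Finset.sum_le_sum fun m _ => he m).trans ?_
    simp
  simp only [Finset.card_univ, Fintype.card_fin] at h2
  have h4 := mul_le_mul_of_nonneg_left h3 (Nat.cast_nonneg (α := ℝ) M)
  nlinarith

/-- Index shift for the Lyapunov function. -/
theorem lag_aux_shift (D : ℕ) (β : ℕ → ℝ) (hβD : β (D + 1) = 0) (s : ℤ → ℝ) (k : ℤ) :
    ∑ d ∈ Finset.Icc 1 D, β d * s (k + 1 - (d : ℤ))
      = β 1 * s k + ∑ d ∈ Finset.Icc 1 D, β (d + 1) * s (k - (d : ℤ)) := by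
  have h : ∀ D : ℕ, ∑ d ∈ Finset.Icc 1 D, β d * s (k + 1 - (d : ℤ)) + β (D + 1) * s (k - (D : ℤ))
      = β 1 * s k + ∑ d ∈ Finset.Icc 1 D, β (d + 1) * s (k - (d : ℤ)) := by
    intro D
    induction D with
    | zero => simp
    | succ D ih =>
      rw [Finset.sum_Icc_succ_top (by omega), Finset.sum_Icc_succ_top (by omega), ← add_assoc,
        ← ih]
      have : k + 1 - ((D + 1 : ℕ) : ℤ) = k - (D : ℤ) := by push_cast; ring
      rw [this]
  have := h D
  rw [hβD] at this
  linarith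

/-- Theorem 3: the o(1/K) rates of LAG for nonconvex smooth objectives. -/
theorem lag_nonconvex_rates {n : ℕ}
    (M D : ℕ) (hM : 1 ≤ M) (hD : 1 ≤ D)
    (Lf : Fin M → EuclideanSpace ℝ (Fin n) → ℝ)
    (hdiff : ∀ m, Differentiable ℝ (Lf m))
    (L : ℝ) (hL : 0 < L)
    (hsmooth : ∀ x y, ‖gradient (fun z => ∑ m, Lf m z) x
        - gradient (fun z => ∑ m, Lf m z) y‖ ≤ L * ‖x - y‖)
    (Lstar : ℝ)
    (hbdd : BddBelow (Set.range fun z => ∑ m, Lf m z))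
    (hLstar : Lstar = ⨅ x, ∑ m, Lf m x)
    (α : ℝ) (hα : 0 < α) (hαL : α < 1 / L)
    (ξ : ℕ → ℝ) (hξ : ∀ d ∈ Finset.Icc 1 D, 0 ≤ ξ d)
    (β : ℕ → ℝ) (hβ : ∀ d ∈ Finset.Icc 1 D, 0 ≤ β d) (hβD : β (D + 1) = 0)
    (hβ1 : β 1 = (1 - α * L) / (2 * α))
    (hξβ : ∀ d ∈ Finset.Icc 1 D, ξ d < 2 * α * (β d - β (d + 1)))
    (θ : ℤ → EuclideanSpace ℝ (Fin n))
    (hpast : ∀ k : ℤ, k ≤ 1 → θ k = θ 1)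
    (Mc : ℤ → Finset (Fin M))
    (θhat : ℤ → Fin M → EuclideanSpace ℝ (Fin n))
    (hhat0 : ∀ m, θhat 0 m = θ 1)
    (hhat : ∀ k : ℤ, 1 ≤ k → ∀ m : Fin M,
      (m ∈ Mc k → θhat k m = θhat (k - 1) m) ∧ (m ∉ Mc k → θhat k m = θ k))
    (hupd : ∀ k : ℤ, 1 ≤ k →
      θ (k + 1) = θ k - α • ∑ m, gradient (Lf m) (θhat k m))
    (htrig : ∀ k : ℤ, 1 ≤ k → ∀ m ∈ Mc k,
      ‖gradient (Lf m) (θhat k m) - gradient (Lf m) (θ k)‖ ^ 2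
        ≤ (1 / (α ^ 2 * (M : ℝ) ^ 2)) *
            ∑ d ∈ Finset.Icc 1 D, ξ d * ‖θ (k + 1 - (d : ℤ)) - θ (k - (d : ℤ))‖ ^ 2) :
    Filter.Tendsto
      (fun K : ℕ => (K : ℝ) *
        sInf ((fun k : ℤ => ‖θ (k + 1) - θ k‖ ^ 2) '' Set.Icc 1 (K : ℤ)))
      Filter.atTop (nhds 0)
    ∧ Filter.Tendsto
      (fun K : ℕ => (K : ℝ) *
        sInf ((fun k : ℤ => ‖gradient (fun z => ∑ m, Lf m z) (θ k)‖ ^ 2) '' Set.Icc 1 (K : ℤ)))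
      Filter.atTop (nhds 0) := by
  have hF : Differentiable ℝ (fun z => ∑ m, Lf m z) := by fun_prop
  have hgrad : ∀ x, gradient (fun z => ∑ m, Lf m z) x = ∑ m, gradient (Lf m) x := by
    intro x
    unfold gradient
    rw [fderiv_fun_sum (fun m _ => hdiff m x), map_sum]
  have hlow : ∀ x, Lstar ≤ ∑ m, Lf m x := fun x => hLstar ▸ ciInf_le hbdd x
  generalize hFF : (fun z => ∑ m, Lf m z) = F at *
  have hFx : ∀ x, ∑ m, Lf m x = F x := fun x => congrFun hFF x
  simp only [hFx] at hlow
  have hMpos : (0 : ℝ) < M := by exact_mod_cast hM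
  -- the squared steps
  obtain ⟨s, hs⟩ : ∃ s : ℤ → ℝ, ∀ k, s k = ‖θ (k + 1) - θ k‖ ^ 2 := ⟨_, fun _ => rfl⟩
  have hs0 : ∀ k, 0 ≤ s k := fun k => by rw [hs]; positivity
  have hsd : ∀ (k : ℤ) (d : ℕ), ‖θ (k + 1 - (d : ℤ)) - θ (k - (d : ℤ))‖ ^ 2 = s (k - d) := by
    intro k d
    rw [hs, show k - (d : ℤ) + 1 = k + 1 - d by ring]
  simp only [hsd] at htrig
  have key : ∀ k : ℤ, 1 ≤ k → F (θ (k + 1)) ≤ F (θ k) - α / 2 * ‖gradient F (θ k)‖ ^ 2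
      + 1 / (2 * α) * ∑ d ∈ Finset.Icc 1 D, ξ d * s (k - d) - β 1 * s k := by
    intro k hk
    have hS0 : 0 ≤ ∑ d ∈ Finset.Icc 1 D, ξ d * s (k - d) :=
      Finset.sum_nonneg fun d hd => mul_nonneg (hξ d hd) (hs0 _)
    have he := lag_aux_sum M (fun m => gradient (Lf m) (θhat k m) - gradient (Lf m) (θ k))
      (1 / (α ^ 2 * (M : ℝ) ^ 2) * ∑ d ∈ Finset.Icc 1 D, ξ d * s (k - d)) (by
        intro m
        by_cases hm : m ∈ Mc k
        · exact htrig k hk m hm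
        · rw [(hhat k hk m).2 hm]
          simp only [sub_self, norm_zero]
          rw [zero_pow two_ne_zero]
          positivity)
    rw [Finset.sum_sub_distrib, ← hgrad] at he
    have hu := hupd k hk
    generalize ∑ m, gradient (Lf m) (θhat k m) = G at he hu
    have hdes := lag_aux_descent F hF L hsmooth (θ k) (-(α • G))
    rw [← sub_eq_add_neg, ← hu] at hdes
    have hsk : s k = α ^ 2 * ‖G‖ ^ 2 := by
      rw [hs, hu, sub_sub_cancel_left, norm_neg, norm_smul, mul_pow, Real.norm_eq_abs, sq_abs]
    rw [inner_neg_right, inner_smul_right, norm_neg, norm_smul, mul_pow, Real.norm_eq_abs, sq_abs]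
      at hdes
    have hexp := norm_sub_sq_real G (gradient F (θ k))
    rw [real_inner_comm] at hexp
    generalize ∑ d ∈ Finset.Icc 1 D, ξ d * s (k - d) = S at *
    have he2 : (M : ℝ) ^ 2 * (1 / (α ^ 2 * (M : ℝ) ^ 2) * S) = S / α ^ 2 := by
      field_simp
    rw [he2] at he
    have he3 : α / 2 * ‖G - gradient F (θ k)‖ ^ 2 ≤ 1 / (2 * α) * S := by
      calc _ ≤ α / 2 * (S / α ^ 2) := mul_le_mul_of_nonneg_left he (by positivity)
        _ = _ := by field_simp
    have hb : β 1 * s k = α / 2 * ‖G‖ ^ 2 - L / 2 * (α ^ 2 * ‖G‖ ^ 2) := by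
      rw [hβ1, hsk]
      field_simp
    rw [hb]
    rw [hexp] at he3
    nlinarith
  -- Lyapunov function
  obtain ⟨V, hV⟩ : ∃ V : ℤ → ℝ, ∀ k, V k = F (θ k)
      + ∑ d ∈ Finset.Icc 1 D, β d * s (k - (d : ℤ)) := ⟨_, fun _ => rfl⟩
  have hVlow : ∀ k, Lstar ≤ V k := by
    intro k
    have : 0 ≤ ∑ d ∈ Finset.Icc 1 D, β d * s (k - (d : ℤ)) :=
      Finset.sum_nonneg fun d hd => mul_nonneg (hβ d hd) (hs0 _)
    rw [hV]
    linarith [hlow (θ k)]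
  have h1D : 1 ∈ Finset.Icc 1 D := Finset.mem_Icc.2 ⟨le_rfl, hD⟩
  have hcd : ∀ d ∈ Finset.Icc 1 D, 0 < β d - β (d + 1) - 1 / (2 * α) * ξ d := by
    intro d hd
    have := hξβ d hd
    have h2 : 1 / (2 * α) * ξ d < β d - β (d + 1) := by
      rw [one_div, inv_mul_lt_iff₀ (by positivity)]
      exact this
    linarith
  have hstep : ∀ k : ℤ, 1 ≤ k → V (k + 1) + α / 2 * ‖gradient F (θ k)‖ ^ 2
      + (β 1 - β (1 + 1) - 1 / (2 * α) * ξ 1) * s (k - 1) ≤ V k := by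
    intro k hk
    have h1 := key k hk
    have h2 := lag_aux_shift D β hβD s k
    have h3 : (β 1 - β (1 + 1) - 1 / (2 * α) * ξ 1) * s (k - (1 : ℕ))
        ≤ ∑ d ∈ Finset.Icc 1 D, (β d - β (d + 1) - 1 / (2 * α) * ξ d) * s (k - d) :=
      Finset.single_le_sum (f := fun d : ℕ => (β d - β (d + 1) - 1 / (2 * α) * ξ d) * s (k - d))
        (fun d hd => mul_nonneg (hcd d hd).le (hs0 _)) h1D
    simp only [sub_mul, Finset.sum_sub_distrib, mul_assoc, ← Finset.mul_sum] at h3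
    push_cast at h3
    rw [hV, hV, h2]
    linarith
  have hc1 := hcd 1 h1D
  constructor
  · have hb := lag_aux_tele (fun k => V (k + 1)) s _ Lstar hc1 (fun k => hVlow _) (by
      intro k hk
      have := hstep (k + 1) (by omega)
      rw [add_sub_cancel_right] at this
      have h0 : 0 ≤ α / 2 * ‖gradient F (θ (k + 1))‖ ^ 2 := by positivity
      show V (k + 1 + 1) + _ ≤ V (k + 1)
      linarith)
    simp only [← hs]
    exact lag_aux_min s hs0 _ hb
  · have hb := lag_aux_tele V (fun k => ‖gradient F (θ k)‖ ^ 2) (α / 2) Lstar (by positivity)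
      hVlow (by
      intro k hk
      have := hstep k hk
      have h0 := mul_nonneg hc1.le (hs0 (k - 1))
      show V (k + 1) + α / 2 * ‖gradient F (θ k)‖ ^ 2 ≤ V k
      linarith)
    exact lag_aux_min _ (fun k => by positivity) _ hb
end

section
/- Assume the LAG setup with ξ_1, …, ξ_D ≥ 0 satisfying Σ_{d=1}^D ξ_d < 1, stepsize α = (1 − Σ_{d=1}^D ξ_d)/L, constants β_d = (Σ_{j=d}^D ξ_j)/(2α) for d = 1, …, D, and with 𝓛 bounded below and 𝓛* := inf 𝓛. Then for every integer K ≥ 1, min_{1 ≤ k ≤ K} ‖∇𝓛(θ^k)‖² ≤ (2L / ((1 − Σ_{d=1}^D ξ_d) K)) · (𝓛(θ^1) − 𝓛*). -/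
open Finset

theorem lag_descent {E : Type*} [NormedAddCommGroup E] [InnerProductSpace ℝ E] [CompleteSpace E]
    (f : E → ℝ) (hf : Differentiable ℝ f) (L : ℝ)
    (hs : ∀ x y, ‖gradient f x - gradient f y‖ ≤ L * ‖x - y‖) (x h : E) :
    f (x + h) ≤ f x + inner ℝ (gradient f x) h + L / 2 * ‖h‖ ^ 2 := by
  have hd : ∀ t : ℝ, HasDerivAt
      (fun t : ℝ => f (x + t • h) - t * inner ℝ (gradient f x) h - L / 2 * ‖h‖ ^ 2 * t ^ 2)
      (inner ℝ (gradient f (x + t • h)) h - inner ℝ (gradient f x) h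
        - L / 2 * ‖h‖ ^ 2 * (2 * t)) t := by
    intro t
    have h1 : HasDerivAt (fun t : ℝ => x + t • h) h t := by
      simpa using ((hasDerivAt_id t).smul_const h).const_add x
    have h2 := ((hf (x + t • h)).hasGradientAt.hasFDerivAt).comp_hasDerivAt t h1
    have h3 := (hasDerivAt_id t).mul_const (inner ℝ (gradient f x) h)
    have h4 := (hasDerivAt_pow 2 t).const_mul (L / 2 * ‖h‖ ^ 2)
    have h5 := (h2.sub h3).sub h4
    refine h5.congr_deriv ?_
    simp
  have hanti : AntitoneOn
      (fun t : ℝ => f (x + t • h) - t * inner ℝ (gradient f x) h - L / 2 * ‖h‖ ^ 2 * t ^ 2)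
      (Set.Icc 0 1) := by
    apply antitoneOn_of_deriv_nonpos (convex_Icc 0 1)
    · exact fun t _ => (hd t).continuousAt.continuousWithinAt
    · exact fun t _ => (hd t).differentiableAt.differentiableWithinAt
    · intro t ht
      rw [interior_Icc] at ht
      rw [(hd t).deriv, ← inner_sub_left]
      have h1 := real_inner_le_norm (gradient f (x + t • h) - gradient f x) h
      have h2 := hs (x + t • h) x
      rw [add_sub_cancel_left, norm_smul, Real.norm_of_nonneg ht.1.le] at h2
      have h3 := mul_le_mul_of_nonneg_right h2 (norm_nonneg h)
      nlinarith
  have h1 := hanti (Set.left_mem_Icc.2 zero_le_one) (Set.right_mem_Icc.2 zero_le_one) zero_le_one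
  simp only [one_smul, zero_smul, add_zero] at h1
  linarith

theorem lag_gradient_sum {E : Type*} [NormedAddCommGroup E] [InnerProductSpace ℝ E]
    [CompleteSpace E] {M : ℕ} (Lf : Fin M → E → ℝ) (hdiff : ∀ m, Differentiable ℝ (Lf m)) (x : E) :
    gradient (fun z => ∑ m, Lf m z) x = ∑ m, gradient (Lf m) x := by
  apply HasGradientAt.gradient
  rw [hasGradientAt_iff_hasFDerivAt, map_sum]
  exact HasFDerivAt.fun_sum fun m _ => (hdiff m x).hasGradientAt.hasFDerivAt

theorem lag_shift (a : ℤ → ℝ) (ha : ∀ j, 0 ≤ a j) (h0 : ∀ j ≤ 0, a j = 0) (K d : ℕ) :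
    ∑ i ∈ range K, a ((i : ℤ) + 1 - d) ≤ ∑ i ∈ range K, a ((i : ℤ) + 1) := by
  induction d with
  | zero => simp
  | succ d ih =>
    refine le_trans ?_ ih
    have := Finset.sum_range_sub (fun i : ℕ => a ((i : ℤ) - d)) K
    rw [Finset.sum_sub_distrib] at this
    have e1 := h0 (((0 : ℕ) : ℤ) - d) (by simp)
    have e2 := ha ((K : ℤ) - d)
    have e3 : ∑ i ∈ range K, a ((i : ℤ) + 1 - (d + 1 : ℕ)) = ∑ i ∈ range K, a ((i : ℤ) - d) :=
      Finset.sum_congr rfl fun i _ => by congr 1; push_cast; ring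
    rw [e3]
    push_cast at this e1
    linarith

/-- Nonconvex rate bound of Proposition 2:
`min_{1≤k≤K} ‖∇𝓛(θ^k)‖² ≤ (2L/((1 − Σ_d ξ_d) K)) (𝓛(θ¹) − 𝓛*)`. -/
theorem lag_nonconvex_rate_bound {n : ℕ}
    (M D : ℕ) (hM : 1 ≤ M) (hD : 1 ≤ D)
    (Lf : Fin M → EuclideanSpace ℝ (Fin n) → ℝ)
    (hdiff : ∀ m, Differentiable ℝ (Lf m))
    (L : ℝ) (hL : 0 < L)
    (hsmooth : ∀ x y, ‖gradient (fun z => ∑ m, Lf m z) x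
        - gradient (fun z => ∑ m, Lf m z) y‖ ≤ L * ‖x - y‖)
    (ξ : ℕ → ℝ) (hξ : ∀ d ∈ Finset.Icc 1 D, 0 ≤ ξ d)
    (hξsum : ∑ d ∈ Finset.Icc 1 D, ξ d < 1)
    (α : ℝ) (hα : α = (1 - ∑ d ∈ Finset.Icc 1 D, ξ d) / L)
    (β : ℕ → ℝ)
    (hβ : ∀ d ∈ Finset.Icc 1 D, β d = (∑ j ∈ Finset.Icc d D, ξ j) / (2 * α))
    (Lstar : ℝ)
    (hbdd : BddBelow (Set.range fun z => ∑ m, Lf m z))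
    (hLstar : Lstar = ⨅ x, ∑ m, Lf m x)
    (θ : ℤ → EuclideanSpace ℝ (Fin n))
    (hpast : ∀ k : ℤ, k ≤ 1 → θ k = θ 1)
    (Mc : ℤ → Finset (Fin M))
    (θhat : ℤ → Fin M → EuclideanSpace ℝ (Fin n))
    (hhat0 : ∀ m, θhat 0 m = θ 1)
    (hhat : ∀ k : ℤ, 1 ≤ k → ∀ m : Fin M,
      (m ∈ Mc k → θhat k m = θhat (k - 1) m) ∧ (m ∉ Mc k → θhat k m = θ k))
    (hupd : ∀ k : ℤ, 1 ≤ k →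
      θ (k + 1) = θ k - α • ∑ m, gradient (Lf m) (θhat k m))
    (htrig : ∀ k : ℤ, 1 ≤ k → ∀ m ∈ Mc k,
      ‖gradient (Lf m) (θhat k m) - gradient (Lf m) (θ k)‖ ^ 2
        ≤ (1 / (α ^ 2 * (M : ℝ) ^ 2)) *
            ∑ d ∈ Finset.Icc 1 D, ξ d * ‖θ (k + 1 - (d : ℤ)) - θ (k - (d : ℤ))‖ ^ 2)
    :
    ∀ K : ℕ, 1 ≤ K →
      sInf ((fun k : ℤ => ‖gradient (fun z => ∑ m, Lf m z) (θ k)‖ ^ 2) '' Set.Icc 1 (K : ℤ))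
        ≤ (2 * L / ((1 - ∑ d ∈ Finset.Icc 1 D, ξ d) * (K : ℝ)))
            * ((∑ m, Lf m (θ 1)) - Lstar) := by
  intro K hK
  set s := ∑ d ∈ Finset.Icc 1 D, ξ d with hs
  set f : EuclideanSpace ℝ (Fin n) → ℝ := fun z => ∑ m, Lf m z with hf
  have hfd : Differentiable ℝ f := by
    rw [hf]; exact Differentiable.fun_sum fun m _ => hdiff m
  have hαpos : 0 < α := by rw [hα]; exact div_pos (by linarith) hL
  have hLα : L * α = 1 - s := by rw [hα]; field_simp
  have hMpos : (0 : ℝ) < M := by exact_mod_cast hM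
  set a : ℤ → ℝ := fun j => ‖θ (j + 1) - θ j‖ ^ 2 with ha
  have ha0 : ∀ j, 0 ≤ a j := fun j => by positivity
  have haz : ∀ j ≤ 0, a j = 0 := by
    intro j hj
    simp [ha, hpast (j + 1) (by omega), hpast j (by omega)]
  set S : ℤ → ℝ := fun k => ∑ d ∈ Finset.Icc 1 D, ξ d * a (k - d) with hS
  have hS0 : ∀ k, 0 ≤ S k := fun k =>
    Finset.sum_nonneg fun d hd => mul_nonneg (hξ d hd) (ha0 _)
  have htrig' : ∀ k : ℤ, 1 ≤ k → ∀ m,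
      ‖gradient (Lf m) (θhat k m) - gradient (Lf m) (θ k)‖ ^ 2
        ≤ (1 / (α ^ 2 * (M : ℝ) ^ 2)) * S k := by
    intro k hk m
    by_cases hm : m ∈ Mc k
    · refine (htrig k hk m hm).trans (le_of_eq ?_)
      congr 1
      refine Finset.sum_congr rfl fun d _ => ?_
      rw [ha]
      simp only
      rw [show k - (d : ℤ) + 1 = k + 1 - d by ring]
    · rw [(hhat k hk m).2 hm]
      have := hS0 k
      rw [sub_self, norm_zero, zero_pow two_ne_zero]
      positivity
  have hstep : ∀ k : ℤ, 1 ≤ k →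
      α / 2 * ‖gradient f (θ k)‖ ^ 2 ≤ f (θ k) - f (θ (k + 1)) + (S k - s * a k) / (2 * α) := by
    intro k hk
    set g := gradient f (θ k) with hg
    set v := ∑ m, gradient (Lf m) (θhat k m) with hv
    have he : ‖v - g‖ ^ 2 ≤ S k / α ^ 2 := by
      have h1 : v - g = ∑ m, (gradient (Lf m) (θhat k m) - gradient (Lf m) (θ k)) := by
        rw [Finset.sum_sub_distrib, hg, hf, lag_gradient_sum Lf hdiff]
      have h2 : ‖v - g‖ ≤ ∑ m, ‖gradient (Lf m) (θhat k m) - gradient (Lf m) (θ k)‖ := by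
        rw [h1]; exact norm_sum_le _ _
      have h3 := sq_sum_le_card_mul_sum_sq (s := (Finset.univ : Finset (Fin M)))
        (f := fun m => ‖gradient (Lf m) (θhat k m) - gradient (Lf m) (θ k)‖)
      have h4 := Finset.sum_le_sum fun m (_ : m ∈ (Finset.univ : Finset (Fin M))) => htrig' k hk m
      rw [Finset.sum_const, Finset.card_univ, Fintype.card_fin, nsmul_eq_mul] at h4
      rw [Finset.card_univ, Fintype.card_fin] at h3
      calc ‖v - g‖ ^ 2 ≤ _ := pow_le_pow_left₀ (norm_nonneg _) h2 2
        _ ≤ _ := h3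
        _ ≤ M * (M * (1 / (α ^ 2 * (M : ℝ) ^ 2) * S k)) :=
          mul_le_mul_of_nonneg_left h4 hMpos.le
        _ = S k / α ^ 2 := by field_simp
    have hdesc := lag_descent f hfd L hsmooth (θ k) (-(α • v))
    have hu : θ (k + 1) = θ k + -(α • v) := by rw [hupd k hk, sub_eq_add_neg]
    rw [← hu, ← hg, inner_neg_right, inner_smul_right, norm_neg, norm_smul,
      Real.norm_of_nonneg hαpos.le] at hdesc
    have hak : a k = α ^ 2 * ‖v‖ ^ 2 := by
      simp only [ha]
      rw [hu, add_sub_cancel_left, norm_neg, norm_smul, Real.norm_of_nonneg hαpos.le, mul_pow]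
    have hpol := norm_sub_sq_real v g
    rw [real_inner_comm] at hpol
    have h6 : (S k - s * a k) / (2 * α) = α / 2 * (S k / α ^ 2) - s * α / 2 * ‖v‖ ^ 2 := by
      rw [hak]; field_simp
    have h7 : L / 2 * (α * ‖v‖) ^ 2 = (1 - s) * α / 2 * ‖v‖ ^ 2 := by
      rw [← hLα]; ring
    have h8 := mul_le_mul_of_nonneg_left he (by positivity : 0 ≤ α / 2)
    rw [hpol] at h8
    rw [h6]
    rw [h7] at hdesc
    linarith
  have hSsum : ∑ i ∈ range K, S ((i : ℤ) + 1) ≤ s * ∑ i ∈ range K, a ((i : ℤ) + 1) := by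
    simp only [hS]
    rw [Finset.sum_comm, hs, Finset.sum_mul]
    refine Finset.sum_le_sum fun d hd => ?_
    rw [← Finset.mul_sum]
    exact mul_le_mul_of_nonneg_left (lag_shift a ha0 haz K d) (hξ d hd)
  have hsum := Finset.sum_le_sum fun (i : ℕ) (_ : i ∈ range K) => hstep ((i : ℤ) + 1) (by omega)
  have htel := Finset.sum_range_sub' (fun i : ℕ => f (θ ((i : ℤ) + 1))) K
  push_cast at htel
  rw [Finset.sum_add_distrib, htel, ← Finset.sum_div, Finset.sum_sub_distrib, ← Finset.mul_sum,
    ← Finset.mul_sum] at hsum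
  have hneg : (∑ i ∈ range K, S ((i : ℤ) + 1) - s * ∑ i ∈ range K, a ((i : ℤ) + 1)) / (2 * α) ≤ 0 :=
    div_nonpos_of_nonpos_of_nonneg (by linarith) (by positivity)
  have hlow : Lstar ≤ f (θ ((K : ℤ) + 1)) := by
    rw [hLstar]; exact ciInf_le hbdd _
  set I := sInf ((fun k : ℤ => ‖gradient f (θ k)‖ ^ 2) '' Set.Icc 1 (K : ℤ)) with hI
  have hmin : (K : ℝ) * I ≤ ∑ i ∈ range K, ‖gradient f (θ ((i : ℤ) + 1))‖ ^ 2 := by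
    have h1 : ∀ i ∈ range K, I ≤ ‖gradient f (θ ((i : ℤ) + 1))‖ ^ 2 := by
      intro i hi
      rw [Finset.mem_range] at hi
      refine csInf_le ⟨0, ?_⟩ ⟨(i : ℤ) + 1, ⟨by omega, by omega⟩, rfl⟩
      rintro _ ⟨k, _, rfl⟩
      positivity
    simpa using Finset.card_nsmul_le_sum _ _ _ h1
  have hKpos : (0 : ℝ) < K := by exact_mod_cast hK
  have hfin : α / 2 * (K * I) ≤ f (θ 1) - Lstar := by
    have := mul_le_mul_of_nonneg_left hmin (by positivity : 0 ≤ α / 2)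
    linarith
  have h1s : 0 < 1 - s := by linarith
  change I ≤ 2 * L / ((1 - s) * K) * (f (θ 1) - Lstar)
  have hc : I = 2 * L / ((1 - s) * K) * (α / 2 * (K * I)) := by
    rw [hα]; field_simp
  rw [hc]
  exact mul_le_mul_of_nonneg_left hfin (by positivity)
end
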